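/- Let φ(x) be a formula of the correspondence language with at most the free variable x. Then φ(x) is logically equivalent to the (1,2)-standard x-translation ST_12(I,x) of some modal intuitionistic formula I if and only if there exists k ∈ ℕ such that φ(x) is invariant with respect to (1,2)-modal k-asimulations. -/

import Mathlib

namespace ModalIntAsim

/-- Binary relation symbols of the correspondence vocabulary: R, R_□, R_◇. -/
inductive RelSym : Type
  | r | box | diam
deriving DecidableEq

/-- Formulas of the correspondence language: classical first-order logic without
identity, with variables indexed by `ℕ`, unary predicate letters `P n` (n : ℕ),
and the three binary relation symbols. -/
inductive FOForm : Type
  | falsum : FOForm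
  | pred : ℕ → ℕ → FOForm            -- `pred n v` is `P_n(x_v)`
  | rel : RelSym → ℕ → ℕ → FOForm    -- `rel s v w` is `S(x_v, x_w)`
  | conj : FOForm → FOForm → FOForm
  | disj : FOForm → FOForm → FOForm
  | impl : FOForm → FOForm → FOForm
  | all : ℕ → FOForm → FOForm
  | ex : ℕ → FOForm → FOForm

namespace FOForm

/-- Free variables of a correspondence formula. -/
def freeVars : FOForm → Finset ℕ
  | falsum => ∅
  | pred _ v => {v}
  | rel _ v w => {v, w}
  | conj f g => f.freeVars ∪ g.freeVars
  | disj f g => f.freeVars ∪ g.freeVars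
  | impl f g => f.freeVars ∪ g.freeVars
  | all v f => f.freeVars \ {v}
  | ex v f => f.freeVars \ {v}

/-- The unary predicate letters occurring in a formula (the binary relation
symbols R, R_□, R_◇ are regarded as belonging to every vocabulary Σ_φ). -/
def predLetters : FOForm → Finset ℕ
  | falsum => ∅
  | pred n _ => {n}
  | rel _ _ _ => ∅
  | conj f g => f.predLetters ∪ g.predLetters
  | disj f g => f.predLetters ∪ g.predLetters
  | impl f g => f.predLetters ∪ g.predLetters
  | all _ f => f.predLetters
  | ex _ f => f.predLetters

/-- Degree of a formula: the greatest number of nested quantifiers. -/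
def degree : FOForm → ℕ
  | falsum => 0
  | pred _ _ => 0
  | rel _ _ _ => 0
  | conj f g => max f.degree g.degree
  | disj f g => max f.degree g.degree
  | impl f g => max f.degree g.degree
  | all _ f => f.degree + 1
  | ex _ f => f.degree + 1

end FOForm

/-- A model of the correspondence language: a domain together with
interpretations of R, R_□, R_◇ and of the unary predicate letters.
(A Θ-model only consults the letters in Θ.) -/
structure Model : Type 1 where
  U : Type
  rel : U → U → Prop
  relBox : U → U → Prop
  relDiam : U → U → Prop
  pred : ℕ → U → Prop

/-- Interpretation of a binary relation symbol in a model. -/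
def Model.relOf (M : Model) : RelSym → M.U → M.U → Prop
  | .r => M.rel
  | .box => M.relBox
  | .diam => M.relDiam

/-- Tarskian satisfaction of a formula in a model under an assignment. -/
def Sat (M : Model) : FOForm → (ℕ → M.U) → Prop
  | .falsum, _ => False
  | .pred n v, α => M.pred n (α v)
  | .rel s v w, α => M.relOf s (α v) (α w)
  | .conj f g, α => Sat M f α ∧ Sat M g α
  | .disj f g, α => Sat M f α ∨ Sat M g α
  | .impl f g, α => Sat M f α → Sat M g α
  | .all v f, α => ∀ u : M.U, Sat M f (Function.update α v u)
  | .ex v f, α => ∃ u : M.U, Sat M f (Function.update α v u)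

/-- `M, a ⊨ φ(x)`: φ is true in `M` under any assignment sending `x` to `a`. -/
def SatAt (M : Model) (a : M.U) (x : ℕ) (φ : FOForm) : Prop :=
  ∀ α : ℕ → M.U, α x = a → Sat M φ α

/-- Logical equivalence of correspondence formulas. -/
def Equiv (φ ψ : FOForm) : Prop :=
  ∀ (M : Model) (α : ℕ → M.U), Sat M φ α ↔ Sat M ψ α

/-- Logical entailment between correspondence formulas. -/
def Entails (φ ψ : FOForm) : Prop :=
  ∀ (M : Model) (α : ℕ → M.U), Sat M φ α → Sat M ψ α

/-- Modal intuitionistic formulas: built from propositional letters `p n`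
using ⊥, ∧, ∨, →, □, ◇. -/
inductive MForm : Type
  | bot : MForm
  | prop : ℕ → MForm
  | conj : MForm → MForm → MForm
  | disj : MForm → MForm → MForm
  | impl : MForm → MForm → MForm
  | box : MForm → MForm
  | diam : MForm → MForm

/-- The (i,j)-standard x-translation `ST_ij`.  `boxOne = true` means the box
clause (□₁) is used (i = 1), `boxOne = false` means (□₂) (i = 2); likewise
`diamOne = true` means the diamond clause (◇₁) (j = 1) and `diamOne = false`
means (◇₂) (j = 2).  Bound variables are chosen fresh as `x+1`, `x+2`. -/
def ST (boxOne diamOne : Bool) : MForm → ℕ → FOForm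
  | .bot, _ => .falsum
  | .prop n, x => .pred n x
  | .conj I J, x => .conj (ST boxOne diamOne I x) (ST boxOne diamOne J x)
  | .disj I J, x => .disj (ST boxOne diamOne I x) (ST boxOne diamOne J x)
  | .impl I J, x =>
      .all (x + 1) (.impl (.rel .r x (x + 1))
        (.impl (ST boxOne diamOne I (x + 1)) (ST boxOne diamOne J (x + 1))))
  | .box I, x =>
      if boxOne then
        .all (x + 1) (.impl (.rel .box x (x + 1)) (ST boxOne diamOne I (x + 1)))
      else
        .all (x + 1) (.impl (.rel .r x (x + 1))
          (.all (x + 2) (.impl (.rel .box (x + 1) (x + 2)) (ST boxOne diamOne I (x + 2)))))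
  | .diam I, x =>
      if diamOne then
        .ex (x + 1) (.conj (.rel .diam x (x + 1)) (ST boxOne diamOne I (x + 1)))
      else
        .all (x + 1) (.impl (.rel .r x (x + 1))
          (.ex (x + 2) (.conj (.rel .diam (x + 1) (x + 2)) (ST boxOne diamOne I (x + 2)))))

/-! ### Conditions on relations between tuples (the k-asimulation conditions).
A relation between the two models is represented by its two directed
components; `N` is the model of the source tuple and `P` that of the target
tuple.  A tuple `(ā_m, a)` is represented as the list `as ++ [a]`, with
`m = as.length`. -/

section TupleConds

variable (N P : Model)

/-- The "p-type" condition: related tuples are nonempty and of equal length. -/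
def TypeCond (A : List N.U → List P.U → Prop) : Prop :=
  ∀ as bs, A as bs → as ≠ [] ∧ as.length = bs.length

/-- (p-base). -/
def BaseCond (Θ : Set ℕ) (A : List N.U → List P.U → Prop) : Prop :=
  ∀ (as : List N.U) (bs : List P.U) (a : N.U) (b : P.U),
    A (as ++ [a]) (bs ++ [b]) → ∀ n ∈ Θ, N.pred n a → P.pred n b

/-- (p-step). -/
def StepCond (k : ℕ) (A : List N.U → List P.U → Prop)
    (Arev : List P.U → List N.U → Prop) : Prop :=
  ∀ (as : List N.U) (bs : List P.U) (a : N.U) (b d : P.U),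
    A (as ++ [a]) (bs ++ [b]) → P.rel b d → as.length < k →
    ∃ c : N.U, N.rel a c ∧ A (as ++ [a, c]) (bs ++ [b, d]) ∧
      Arev (bs ++ [b, d]) (as ++ [a, c])

/-- (p-box-1). -/
def Box1Cond (k : ℕ) (A : List N.U → List P.U → Prop) : Prop :=
  ∀ (as : List N.U) (bs : List P.U) (a : N.U) (b d : P.U),
    A (as ++ [a]) (bs ++ [b]) → P.relBox b d → as.length < k →
    ∃ c : N.U, N.relBox a c ∧ A (as ++ [a, c]) (bs ++ [b, d])

/-- (p-box-2). -/
def Box2Cond (k : ℕ) (A : List N.U → List P.U → Prop) : Prop :=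
  ∀ (as : List N.U) (bs : List P.U) (a : N.U) (b d f : P.U),
    A (as ++ [a]) (bs ++ [b]) → P.rel b d → P.relBox d f → as.length + 1 < k →
    ∃ c e : N.U, N.rel a c ∧ N.relBox c e ∧ A (as ++ [a, c, e]) (bs ++ [b, d, f])

/-- (p-diam-1). -/
def Diam1Cond (k : ℕ) (A : List N.U → List P.U → Prop) : Prop :=
  ∀ (as : List N.U) (bs : List P.U) (a c : N.U) (b : P.U),
    A (as ++ [a]) (bs ++ [b]) → N.relDiam a c → as.length < k →
    ∃ d : P.U, P.relDiam b d ∧ A (as ++ [a, c]) (bs ++ [b, d])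

/-- (p-diam-2(1)). -/
def Diam2aCond (k : ℕ) (A B : List N.U → List P.U → Prop) : Prop :=
  ∀ (as : List N.U) (bs : List P.U) (a : N.U) (b d : P.U),
    A (as ++ [a]) (bs ++ [b]) → P.rel b d → as.length + 1 < k →
    ∃ c : N.U, N.rel a c ∧ B (as ++ [a, c]) (bs ++ [b, d])

/-- (p-diam-2(2)). -/
def Diam2bCond (k : ℕ) (B A : List N.U → List P.U → Prop) : Prop :=
  ∀ (as : List N.U) (bs : List P.U) (a c : N.U) (b : P.U),
    B (as ++ [a]) (bs ++ [b]) → N.relDiam a c → as.length < k →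
    ∃ d : P.U, P.relDiam b d ∧ A (as ++ [a, c]) (bs ++ [b, d])

end TupleConds

/-- An (i,1)-modal ⟨(M₁,t),(M₂,u)⟩_k-asimulation (j = 1): a single relation `A`
given by its two directed components `A12`, `A21`. -/
def IsKAsimD1 (boxOne : Bool) (Θ : Set ℕ) (M₁ M₂ : Model) (t : M₁.U) (u : M₂.U) (k : ℕ)
    (A12 : List M₁.U → List M₂.U → Prop) (A21 : List M₂.U → List M₁.U → Prop) : Prop :=
  TypeCond M₁ M₂ A12 ∧ TypeCond M₂ M₁ A21 ∧
  A12 [t] [u] ∧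
  BaseCond M₁ M₂ Θ A12 ∧ BaseCond M₂ M₁ Θ A21 ∧
  StepCond M₁ M₂ k A12 A21 ∧ StepCond M₂ M₁ k A21 A12 ∧
  (if boxOne then Box1Cond M₁ M₂ k A12 ∧ Box1Cond M₂ M₁ k A21
   else Box2Cond M₁ M₂ k A12 ∧ Box2Cond M₂ M₁ k A21) ∧
  Diam1Cond M₁ M₂ k A12 ∧ Diam1Cond M₂ M₁ k A21

/-- An (i,2)-modal ⟨(M₁,t),(M₂,u)⟩_k-asimulation (j = 2): an ordered pair
(A, B) of relations, each given by its two directed components. -/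
def IsKAsimD2 (boxOne : Bool) (Θ : Set ℕ) (M₁ M₂ : Model) (t : M₁.U) (u : M₂.U) (k : ℕ)
    (A12 : List M₁.U → List M₂.U → Prop) (A21 : List M₂.U → List M₁.U → Prop)
    (B12 : List M₁.U → List M₂.U → Prop) (B21 : List M₂.U → List M₁.U → Prop) : Prop :=
  TypeCond M₁ M₂ A12 ∧ TypeCond M₂ M₁ A21 ∧
  TypeCond M₁ M₂ B12 ∧ TypeCond M₂ M₁ B21 ∧
  A12 [t] [u] ∧
  BaseCond M₁ M₂ Θ A12 ∧ BaseCond M₂ M₁ Θ A21 ∧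
  StepCond M₁ M₂ k A12 A21 ∧ StepCond M₂ M₁ k A21 A12 ∧
  (if boxOne then Box1Cond M₁ M₂ k A12 ∧ Box1Cond M₂ M₁ k A21
   else Box2Cond M₁ M₂ k A12 ∧ Box2Cond M₂ M₁ k A21) ∧
  Diam2aCond M₁ M₂ k A12 B12 ∧ Diam2aCond M₂ M₁ k A21 B21 ∧
  Diam2bCond M₁ M₂ k B12 A12 ∧ Diam2bCond M₂ M₁ k B21 A21

/-- φ(x) is invariant with respect to (i,1)-modal k-asimulations. -/
def KInvariantD1 (boxOne : Bool) (x : ℕ) (φ : FOForm) (k : ℕ) : Prop :=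
  ∀ Θ : Set ℕ, (φ.predLetters : Set ℕ) ⊆ Θ →
  ∀ (M₁ M₂ : Model) (t : M₁.U) (u : M₂.U)
    (A12 : List M₁.U → List M₂.U → Prop) (A21 : List M₂.U → List M₁.U → Prop),
    IsKAsimD1 boxOne Θ M₁ M₂ t u k A12 A21 →
    ∀ (a : M₁.U) (b : M₂.U), A12 [a] [b] → SatAt M₁ a x φ → SatAt M₂ b x φ

/-- φ(x) is invariant with respect to (i,2)-modal k-asimulations. -/
def KInvariantD2 (boxOne : Bool) (x : ℕ) (φ : FOForm) (k : ℕ) : Prop :=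
  ∀ Θ : Set ℕ, (φ.predLetters : Set ℕ) ⊆ Θ →
  ∀ (M₁ M₂ : Model) (t : M₁.U) (u : M₂.U)
    (A12 : List M₁.U → List M₂.U → Prop) (A21 : List M₂.U → List M₁.U → Prop)
    (B12 : List M₁.U → List M₂.U → Prop) (B21 : List M₂.U → List M₁.U → Prop),
    IsKAsimD2 boxOne Θ M₁ M₂ t u k A12 A21 B12 B21 →
    ∀ (a : M₁.U) (b : M₂.U), A12 [a] [b] → SatAt M₁ a x φ → SatAt M₂ b x φ

/-! ### Conditions for asimulations *simpliciter* (relations between elements). -/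

section ElemConds

variable (N P : Model)

/-- (base). -/
def BaseCondE (Θ : Set ℕ) (A : N.U → P.U → Prop) : Prop :=
  ∀ (a : N.U) (b : P.U), A a b → ∀ n ∈ Θ, N.pred n a → P.pred n b

/-- (step). -/
def StepCondE (A : N.U → P.U → Prop) (Arev : P.U → N.U → Prop) : Prop :=
  ∀ (a : N.U) (b d : P.U), A a b → P.rel b d →
    ∃ c : N.U, N.rel a c ∧ A c d ∧ Arev d c

/-- (box-1). -/
def Box1CondE (A : N.U → P.U → Prop) : Prop :=
  ∀ (a : N.U) (b d : P.U), A a b → P.relBox b d →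
    ∃ c : N.U, N.relBox a c ∧ A c d

/-- (box-2). -/
def Box2CondE (A : N.U → P.U → Prop) : Prop :=
  ∀ (a : N.U) (b d f : P.U), A a b → P.rel b d → P.relBox d f →
    ∃ c e : N.U, N.rel a c ∧ N.relBox c e ∧ A e f

/-- (diam-1). -/
def Diam1CondE (A : N.U → P.U → Prop) : Prop :=
  ∀ (a c : N.U) (b : P.U), A a b → N.relDiam a c →
    ∃ d : P.U, P.relDiam b d ∧ A c d

/-- (diam-2(1)). -/
def Diam2aCondE (A B : N.U → P.U → Prop) : Prop :=
  ∀ (a : N.U) (b d : P.U), A a b → P.rel b d →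
    ∃ c : N.U, N.rel a c ∧ B c d

/-- (diam-2(2)). -/
def Diam2bCondE (B A : N.U → P.U → Prop) : Prop :=
  ∀ (a c : N.U) (b : P.U), B a b → N.relDiam a c →
    ∃ d : P.U, P.relDiam b d ∧ A c d

end ElemConds

/-- An (i,1)-modal ⟨(M₁,t),(M₂,u)⟩-asimulation (j = 1). -/
def IsAsimD1 (boxOne : Bool) (Θ : Set ℕ) (M₁ M₂ : Model) (t : M₁.U) (u : M₂.U)
    (A12 : M₁.U → M₂.U → Prop) (A21 : M₂.U → M₁.U → Prop) : Prop :=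
  A12 t u ∧
  BaseCondE M₁ M₂ Θ A12 ∧ BaseCondE M₂ M₁ Θ A21 ∧
  StepCondE M₁ M₂ A12 A21 ∧ StepCondE M₂ M₁ A21 A12 ∧
  (if boxOne then Box1CondE M₁ M₂ A12 ∧ Box1CondE M₂ M₁ A21
   else Box2CondE M₁ M₂ A12 ∧ Box2CondE M₂ M₁ A21) ∧
  Diam1CondE M₁ M₂ A12 ∧ Diam1CondE M₂ M₁ A21

/-- An (i,2)-modal ⟨(M₁,t),(M₂,u)⟩-asimulation (j = 2). -/
def IsAsimD2 (boxOne : Bool) (Θ : Set ℕ) (M₁ M₂ : Model) (t : M₁.U) (u : M₂.U)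
    (A12 : M₁.U → M₂.U → Prop) (A21 : M₂.U → M₁.U → Prop)
    (B12 : M₁.U → M₂.U → Prop) (B21 : M₂.U → M₁.U → Prop) : Prop :=
  A12 t u ∧
  BaseCondE M₁ M₂ Θ A12 ∧ BaseCondE M₂ M₁ Θ A21 ∧
  StepCondE M₁ M₂ A12 A21 ∧ StepCondE M₂ M₁ A21 A12 ∧
  (if boxOne then Box1CondE M₁ M₂ A12 ∧ Box1CondE M₂ M₁ A21
   else Box2CondE M₁ M₂ A12 ∧ Box2CondE M₂ M₁ A21) ∧
  Diam2aCondE M₁ M₂ A12 B12 ∧ Diam2aCondE M₂ M₁ A21 B21 ∧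
  Diam2bCondE M₁ M₂ B12 A12 ∧ Diam2bCondE M₂ M₁ B21 A21

/-- φ(x) is invariant with respect to (i,1)-modal asimulations. -/
def InvariantD1 (boxOne : Bool) (x : ℕ) (φ : FOForm) : Prop :=
  ∀ Θ : Set ℕ, (φ.predLetters : Set ℕ) ⊆ Θ →
  ∀ (M₁ M₂ : Model) (t : M₁.U) (u : M₂.U)
    (A12 : M₁.U → M₂.U → Prop) (A21 : M₂.U → M₁.U → Prop),
    IsAsimD1 boxOne Θ M₁ M₂ t u A12 A21 →
    ∀ (a : M₁.U) (b : M₂.U), A12 a b → SatAt M₁ a x φ → SatAt M₂ b x φ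

/-- φ(x) is invariant with respect to (i,2)-modal asimulations. -/
def InvariantD2 (boxOne : Bool) (x : ℕ) (φ : FOForm) : Prop :=
  ∀ Θ : Set ℕ, (φ.predLetters : Set ℕ) ⊆ Θ →
  ∀ (M₁ M₂ : Model) (t : M₁.U) (u : M₂.U)
    (A12 : M₁.U → M₂.U → Prop) (A21 : M₂.U → M₁.U → Prop)
    (B12 : M₁.U → M₂.U → Prop) (B21 : M₂.U → M₁.U → Prop),
    IsAsimD2 boxOne Θ M₁ M₂ t u A12 A21 B12 B21 →
    ∀ (a : M₁.U) (b : M₂.U), A12 a b → SatAt M₁ a x φ → SatAt M₂ b x φ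

/-! ### Types, complete conjunctions, ω-saturation. -/

/-- `int(φ,x,l)`: the set of (2,2)-standard x-translations of modal
intuitionistic formulas which are (Σ_φ,x,l)-formulas. -/
def intSet (φ : FOForm) (x l : ℕ) : Set FOForm :=
  {ψ | (∃ I : MForm, ψ = ST false false I x) ∧
    ψ.predLetters ⊆ φ.predLetters ∧ ψ.freeVars ⊆ {x} ∧ ψ.degree ≤ l}

/-- `tp_l(φ(x),M,a)`. -/
def tpSet (φ : FOForm) (x l : ℕ) (M : Model) (a : M.U) : Set FOForm :=
  {ψ | ψ ∈ intSet φ x l ∧ SatAt M a x ψ}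

/-- Conjunction of a nonempty list of formulas. -/
def listConj : FOForm → List FOForm → FOForm
  | ψ, [] => ψ
  | ψ, χ :: L => FOForm.conj ψ (listConj χ L)

/-- Ψ(x) is a complete (φ,x,k)-conjunction. -/
def IsCompleteConj (φ : FOForm) (x k : ℕ) (Ψ : FOForm) : Prop :=
  (∃ (ψ₀ : FOForm) (L : List FOForm), ψ₀ ∈ intSet φ x k ∧
    (∀ χ ∈ L, χ ∈ intSet φ x k) ∧ Ψ = listConj ψ₀ L) ∧
  ∃ (M : Model) (a : M.U), SatAt M a x (FOForm.conj Ψ φ) ∧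
    ∀ ψ ∈ tpSet φ x k M a, Entails Ψ ψ

/-- `int_x(Θ)` for the (i,j)-standard translation. -/
def intX (Θ : Set ℕ) (boxOne diamOne : Bool) (x : ℕ) : Set FOForm :=
  {ψ | (∃ I : MForm, ψ = ST boxOne diamOne I x) ∧ (ψ.predLetters : Set ℕ) ⊆ Θ}

/-- `tp_x(M,t)` for the (i,j)-standard translation. -/
def tpX (Θ : Set ℕ) (boxOne diamOne : Bool) (x : ℕ) (M : Model) (t : M.U) : Set FOForm :=
  {ψ | ψ ∈ intX Θ boxOne diamOne x ∧ SatAt M t x ψ}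

/-- `imp_x(M,t) = ⋂ { t̄p_x(M,u) : t R_◇ u }` (for the (2,2)-translation). -/
def impX (Θ : Set ℕ) (x : ℕ) (M : Model) (t : M.U) : Set FOForm :=
  {ψ | ψ ∈ intX Θ false false x ∧ ∀ u : M.U, M.relDiam t u → ¬ SatAt M u x ψ}

/-- ω-saturation: for every finite tuple of parameters (the first `n` values of
an assignment `α`) and every set `Γ` of formulas with finitely many free
variables beyond the parameters, if `Γ` is consistent with the first-order
theory of `[M,ā]` (i.e. satisfiable together with it in some model), then `Γ`
is realized in `[M,ā]`. -/
def OmegaSaturated (M : Model) : Prop :=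
  ∀ (n : ℕ) (α : ℕ → M.U) (Γ : Set FOForm),
    (∃ k : ℕ, ∀ γ ∈ Γ, γ.freeVars ⊆ Finset.range (n + k)) →
    (∃ (N : Model) (β : ℕ → N.U),
      (∀ ψ : FOForm, ψ.freeVars ⊆ Finset.range n → Sat M ψ α → Sat N ψ β) ∧
      ∀ γ ∈ Γ, Sat N γ β) →
    ∃ α' : ℕ → M.U, (∀ i < n, α' i = α i) ∧ ∀ γ ∈ Γ, Sat M γ α'

/-! ### Relativization to a class κ of models. -/

/-- κ(Θ) is first-order axiomatizable for every finite Θ (with R ∈ Θ): for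
every finite set `S` of unary predicate letters there is a set of Θ-sentences
axiomatizing membership in κ. -/
def FinAxiomatizable (κ : Set Model) : Prop :=
  ∀ S : Finset ℕ, ∃ Ax : Set FOForm,
    (∀ ψ ∈ Ax, ψ.freeVars = ∅ ∧ (ψ.predLetters : Set ℕ) ⊆ (S : Set ℕ)) ∧
    ∀ M : Model, M ∈ κ ↔ ∀ ψ ∈ Ax, ∀ α : ℕ → M.U, Sat M ψ α

/-- φ κ-follows from ψ: {ψ, ¬φ} is not κ-satisfiable. -/
def KappaFollows (κ : Set Model) (ψ φ : FOForm) : Prop :=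
  ¬ ∃ M : Model, M ∈ κ ∧ ∃ α : ℕ → M.U, Sat M ψ α ∧ ¬ Sat M φ α

/-- κ-equivalence of formulas. -/
def KappaEquiv (κ : Set Model) (φ ψ : FOForm) : Prop :=
  KappaFollows κ φ ψ ∧ KappaFollows κ ψ φ

/-- φ(x) is κ-invariant with respect to (i,1)-modal asimulations. -/
def KappaInvariantD1 (κ : Set Model) (boxOne : Bool) (x : ℕ) (φ : FOForm) : Prop :=
  ∀ Θ : Set ℕ, (φ.predLetters : Set ℕ) ⊆ Θ →
  ∀ (M₁ M₂ : Model), M₁ ∈ κ → M₂ ∈ κ →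
  ∀ (t : M₁.U) (u : M₂.U)
    (A12 : M₁.U → M₂.U → Prop) (A21 : M₂.U → M₁.U → Prop),
    IsAsimD1 boxOne Θ M₁ M₂ t u A12 A21 →
    ∀ (a : M₁.U) (b : M₂.U), A12 a b → SatAt M₁ a x φ → SatAt M₂ b x φ

/-- φ(x) is κ-invariant with respect to (i,2)-modal asimulations. -/
def KappaInvariantD2 (κ : Set Model) (boxOne : Bool) (x : ℕ) (φ : FOForm) : Prop :=
  ∀ Θ : Set ℕ, (φ.predLetters : Set ℕ) ⊆ Θ →
  ∀ (M₁ M₂ : Model), M₁ ∈ κ → M₂ ∈ κ →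
  ∀ (t : M₁.U) (u : M₂.U)
    (A12 : M₁.U → M₂.U → Prop) (A21 : M₂.U → M₁.U → Prop)
    (B12 : M₁.U → M₂.U → Prop) (B21 : M₂.U → M₁.U → Prop),
    IsAsimD2 boxOne Θ M₁ M₂ t u A12 A21 B12 B21 →
    ∀ (a : M₁.U) (b : M₂.U), A12 a b → SatAt M₁ a x φ → SatAt M₂ b x φ

/-- φ(x) is κ-invariant with respect to (i,j)-modal asimulations
(`diamOne = true` means j = 1). -/
def KappaInvariant (κ : Set Model) (boxOne diamOne : Bool) (x : ℕ) (φ : FOForm) : Prop :=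
  if diamOne then KappaInvariantD1 κ boxOne x φ else KappaInvariantD2 κ boxOne x φ


/-!
Count `◇` as two modalities and fix finitely many letters. The truth sets of the formulas of modal
depth at most `n` then form a finite lattice of sets of pointed models. So for every point `d` the
formulas of depth `n` true at `d` have a conjunction of depth `n`, and those false at `d` a
disjunction of depth `n`; prefixing these with `→`, `□` or `◇` turns inclusion of depth-`(n + 1)`
theories into the back-and-forth conditions, so inclusion of theories of depth `k - m` at the
`m`-th successors is a `k`-asimulation. A `k`-invariant `φ` is therefore preserved by inclusion of
depth-`k` theories, and is equivalent to the disjunction of the depth-`k` formulas that entail it.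

Conversely, asimulations preserve formulas of bounded depth by induction. A formula whose
translation is equivalent to `φ` may contain letters foreign to `φ`; these are made false in both
models first, which changes neither `φ` nor the asimulation.
-/

/-- Kripke forcing, the meaning of the (1,2)-standard translation: the `□` clause is not
relativized to `R`-successors, the `◇` clause is. -/
def Forces (M : Model) : MForm → M.U → Prop
  | .bot, _ => False
  | .prop n, a => M.pred n a
  | .conj I J, a => Forces M I a ∧ Forces M J a
  | .disj I J, a => Forces M I a ∨ Forces M J a
  | .impl I J, a => ∀ b, M.rel a b → Forces M I b → Forces M J b
  | .box I, a => ∀ b, M.relBox a b → Forces M I b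
  | .diam I, a => ∀ b, M.rel a b → ∃ c, M.relDiam b c ∧ Forces M I c

theorem sat_ST_iff_forces (M : Model) (I : MForm) (x : ℕ) (α : ℕ → M.U) :
    Sat M (ST true false I x) α ↔ Forces M I (α x) := by
  induction I generalizing x α with
  | bot | prop => rfl
  | conj I J hI hJ | disj I J hI hJ => simp [ST, Sat, Forces, hI, hJ]
  | impl I J hI hJ => simp [ST, Sat, Forces, hI, hJ, Model.relOf]
  | box I hI | diam I hI => simp [ST, Sat, Forces, hI, Model.relOf]

/-! ### Coincidence lemmas for the correspondence language -/

theorem sat_congr {M : Model} {φ : FOForm} {α β : ℕ → M.U} (h : ∀ v ∈ φ.freeVars, α v = β v) :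
    Sat M φ α ↔ Sat M φ β := by
  induction φ generalizing α β with
  | falsum => rfl
  | pred n v => simp_all [FOForm.freeVars, Sat]
  | rel s v w => simp_all [FOForm.freeVars, Sat]
  | conj f g hf hg | disj f g hf hg | impl f g hf hg =>
    simp only [FOForm.freeVars, Finset.mem_union] at h
    simp only [Sat, hf fun v hv => h v (.inl hv), hg fun v hv => h v (.inr hv)]
  | all v f hf =>
    exact forall_congr' fun u => hf fun w hw => by
      grind [FOForm.freeVars, Function.update_apply]
  | ex v f hf =>
    exact exists_congr fun u => hf fun w hw => by
      grind [FOForm.freeVars, Function.update_apply]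

theorem satAt_iff_sat {x : ℕ} {φ : FOForm} (hfv : φ.freeVars ⊆ {x}) {M : Model} (α : ℕ → M.U) :
    SatAt M (α x) x φ ↔ Sat M φ α := by
  refine ⟨fun h => h α rfl, fun h β hβ => (sat_congr fun v hv => ?_).2 h⟩
  rw [Finset.mem_singleton.1 (hfv hv), hβ]

namespace Model

/-- The model obtained from `M` by making all letters outside `Θ` false everywhere. -/
def restrict (M : Model) (Θ : Set ℕ) : Model where
  U := M.U
  rel := M.rel
  relBox := M.relBox
  relDiam := M.relDiam
  pred n a := n ∈ Θ ∧ M.pred n a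

end Model

theorem sat_restrict {M : Model} {Θ : Set ℕ} {φ : FOForm} (hφ : (φ.predLetters : Set ℕ) ⊆ Θ)
    (α : ℕ → M.U) : Sat (M.restrict Θ) φ α ↔ Sat M φ α := by
  induction φ generalizing α with
  | falsum => rfl
  | pred n v => exact and_iff_right (hφ (by simp [FOForm.predLetters]))
  | rel s v w => cases s <;> rfl
  | conj f g hf hg | disj f g hf hg | impl f g hf hg =>
    simp only [FOForm.predLetters, Finset.coe_union, Set.union_subset_iff] at hφ
    simp only [Sat, hf hφ.1, hg hφ.2]
  | all v f hf => exact forall_congr' fun u => hf hφ _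
  | ex v f hf => exact exists_congr fun u => hf hφ _

/-! ### Formulas of bounded modal depth -/

/-- `Fragment Θ n I`: `I` is a modal formula of depth at most `n` in the letters of `Θ`, where a
diamond counts twice, since it is witnessed along `R` and then `R_◇`. The formula `⊥ → ⊥` is given
depth `0`, so that every fragment contains a true formula. -/
inductive Fragment (Θ : Set ℕ) : ℕ → MForm → Prop
  | bot {n : ℕ} : Fragment Θ n .bot
  | top {n : ℕ} : Fragment Θ n (.impl .bot .bot)
  | prop {n p : ℕ} : p ∈ Θ → Fragment Θ n (.prop p)
  | conj {n : ℕ} {I J : MForm} : Fragment Θ n I → Fragment Θ n J → Fragment Θ n (.conj I J)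
  | disj {n : ℕ} {I J : MForm} : Fragment Θ n I → Fragment Θ n J → Fragment Θ n (.disj I J)
  | impl {m n : ℕ} {I J : MForm} :
      m < n → Fragment Θ m I → Fragment Θ m J → Fragment Θ n (.impl I J)
  | box {m n : ℕ} {I : MForm} : m < n → Fragment Θ m I → Fragment Θ n (.box I)
  | diam {m n : ℕ} {I : MForm} : m + 1 < n → Fragment Θ m I → Fragment Θ n (.diam I)

theorem Fragment.mono {Θ : Set ℕ} {m n : ℕ} {I : MForm} (hI : Fragment Θ m I) (hmn : m ≤ n) :
    Fragment Θ n I := by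
  induction hI with
  | bot => exact .bot
  | top => exact .top
  | prop hp => exact .prop hp
  | conj _ _ hI hJ => exact .conj (hI hmn) (hJ hmn)
  | disj _ _ hI hJ => exact .disj (hI hmn) (hJ hmn)
  | impl h hI hJ => exact .impl (h.trans_le hmn) hI hJ
  | box h hI => exact .box (h.trans_le hmn) hI
  | diam h hI => exact .diam (h.trans_le hmn) hI

theorem exists_fragment_univ (I : MForm) : ∃ n, Fragment Set.univ n I := by
  induction I with
  | bot => exact ⟨0, .bot⟩
  | prop p => exact ⟨0, .prop trivial⟩
  | conj I J hI hJ =>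
    obtain ⟨⟨m, hm⟩, n, hn⟩ := hI, hJ
    exact ⟨max m n, .conj (hm.mono (le_max_left m n)) (hn.mono (le_max_right m n))⟩
  | disj I J hI hJ =>
    obtain ⟨⟨m, hm⟩, n, hn⟩ := hI, hJ
    exact ⟨max m n, .disj (hm.mono (le_max_left m n)) (hn.mono (le_max_right m n))⟩
  | impl I J hI hJ =>
    obtain ⟨⟨m, hm⟩, n, hn⟩ := hI, hJ
    exact ⟨max m n + 1, .impl (max m n).lt_succ_self (hm.mono (le_max_left m n))
      (hn.mono (le_max_right m n))⟩
  | box I hI =>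
    obtain ⟨n, hn⟩ := hI
    exact ⟨n + 1, .box n.lt_succ_self hn⟩
  | diam I hI =>
    obtain ⟨n, hn⟩ := hI
    exact ⟨n + 2, .diam (n + 1).lt_succ_self hn⟩

/-! ### Preservation under asimulations -/

/-- The conditions in the definition of a (1,2)-modal `k`-asimulation that concern pairs of tuples
directed from `N` to `P`; a `k`-asimulation consists of two such halves. -/
structure IsHalfAsim (Θ : Set ℕ) (N P : Model) (k : ℕ) (A : List N.U → List P.U → Prop)
    (Arev : List P.U → List N.U → Prop) (B : List N.U → List P.U → Prop) : Prop where
  type_fst : TypeCond N P A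
  type_snd : TypeCond N P B
  base : BaseCond N P Θ A
  step : StepCond N P k A Arev
  box : Box1Cond N P k A
  diam_fst : Diam2aCond N P k A B
  diam_snd : Diam2bCond N P k B A

theorem isKAsimD2_true_iff {Θ : Set ℕ} {M₁ M₂ : Model} {t : M₁.U} {u : M₂.U} {k : ℕ}
    {A12 B12 : List M₁.U → List M₂.U → Prop} {A21 B21 : List M₂.U → List M₁.U → Prop} :
    IsKAsimD2 true Θ M₁ M₂ t u k A12 A21 B12 B21 ↔
      A12 [t] [u] ∧ IsHalfAsim Θ M₁ M₂ k A12 A21 B12 ∧ IsHalfAsim Θ M₂ M₁ k A21 A12 B21 := by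
  constructor
  · rintro ⟨tA, tA', tB, tB', root, b, b', s, s', ⟨x, x'⟩, d, d', e, e'⟩
    exact ⟨root, ⟨tA, tB, b, s, x, d, e⟩, ⟨tA', tB', b', s', x', d', e'⟩⟩
  · rintro ⟨root, ⟨tA, tB, b, s, x, d, e⟩, ⟨tA', tB', b', s', x', d', e'⟩⟩
    exact ⟨tA, tA', tB, tB', root, b, b', s, s', ⟨x, x'⟩, d, d', e, e'⟩

section Preservation

variable {Θ : Set ℕ} {N P : Model} {k : ℕ} {A B : List N.U → List P.U → Prop}
  {Arev Brev : List P.U → List N.U → Prop}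

theorem IsHalfAsim.restrict (h : IsHalfAsim Θ N P k A Arev B) :
    IsHalfAsim Set.univ (N.restrict Θ) (P.restrict Θ) k A Arev B where
  type_fst := h.type_fst
  type_snd := h.type_snd
  base as bs a b hab n _ hn := ⟨hn.1, h.base as bs a b hab n hn.1 hn.2⟩
  step := h.step
  box := h.box
  diam_fst := h.diam_fst
  diam_snd := h.diam_snd

theorem IsHalfAsim.length_eq (h : IsHalfAsim Θ N P k A Arev B) {as : List N.U} {bs : List P.U}
    {a : N.U} {b : P.U} (hab : A (as ++ [a]) (bs ++ [b])) : as.length = bs.length := by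
  simpa using (h.type_fst _ _ hab).2

theorem Fragment.forces_of_isHalfAsim {n : ℕ} {I : MForm} (hI : Fragment Θ n I)
    (h : IsHalfAsim Θ N P k A Arev B) (h' : IsHalfAsim Θ P N k Arev A Brev)
    {as : List N.U} {bs : List P.U} {a : N.U} {b : P.U} (hab : A (as ++ [a]) (bs ++ [b]))
    (hk : as.length + n ≤ k) (ha : Forces N I a) : Forces P I b := by
  have hlen := h.length_eq hab
  induction hI generalizing N P A B Arev Brev as bs a b with
  | bot => exact ha
  | top => exact fun _ _ hd => hd
  | prop hp => exact h.base as bs a b hab _ hp ha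
  | conj _ _ ihI ihJ =>
    exact ⟨ihI h h' hab hk ha.1 hlen, ihJ h h' hab hk ha.2 hlen⟩
  | disj _ _ ihI ihJ =>
    exact ha.imp (ihI h h' hab hk · hlen) (ihJ h h' hab hk · hlen)
  | impl hm _ _ ihI ihJ =>
    intro d hbd hd
    obtain ⟨c, hac, hcd, hdc⟩ := h.step as bs a b d hab hbd (by lia)
    rw [List.append_cons as, List.append_cons bs] at hcd hdc
    have hc := ihI h' h hdc (by grind) hd (by simp [hlen])
    exact ihJ h h' hcd (by grind) (ha c hac hc) (by simp [hlen])
  | box hm _ ihI =>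
    intro d hbd
    obtain ⟨c, hac, hcd⟩ := h.box as bs a b d hab hbd (by lia)
    rw [List.append_cons as, List.append_cons bs] at hcd
    exact ihI h h' hcd (by grind) (ha c hac) (by simp [hlen])
  | diam hm _ ihI =>
    intro d hbd
    obtain ⟨c, hac, hcd⟩ := h.diam_fst as bs a b d hab hbd (by lia)
    obtain ⟨e, hce, he⟩ := ha c hac
    rw [List.append_cons as, List.append_cons bs] at hcd
    obtain ⟨f, hdf, hef⟩ := h.diam_snd _ _ c e d hcd hce (by grind)
    rw [List.append_cons (as ++ [a]), List.append_cons (bs ++ [b])] at hef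
    exact ⟨f, hdf, ihI h h' hef (by grind) he (by simp [hlen])⟩

end Preservation

theorem Fragment.kInvariantD2_of_equiv {k x : ℕ} {I : MForm} {φ : FOForm}
    (hI : Fragment Set.univ k I) (hφ : Equiv φ (ST true false I x)) :
    KInvariantD2 true x φ k := by
  intro Θ hΘ M₁ M₂ t u A12 A21 B12 B21 hA a b hab ha β hβ
  obtain ⟨-, h12, h21⟩ := isKAsimD2_true_iff.1 hA
  have sat_iff_forces (M : Model) (α : ℕ → M.U) :
      Sat M φ α ↔ Forces (M.restrict Θ) I (α x) :=
    (sat_restrict hΘ α).symm.trans <| (hφ (M.restrict Θ) α).trans <|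
      sat_ST_iff_forces (M.restrict Θ) I x α
  have hIa : Forces (M₁.restrict Θ) I a := (sat_iff_forces M₁ fun _ => a).1 (ha _ rfl)
  have hIb : Forces (M₂.restrict Θ) I b :=
    hI.forces_of_isHalfAsim h12.restrict h21.restrict (as := []) (bs := []) hab (by simp) hIa
  exact (sat_iff_forces M₂ β).2 (hβ ▸ hIb)

/-! ### Finiteness of the fragments up to equivalence -/

/-- The set of pointed models in which `I` is true; equality of truth sets is logical
equivalence. -/
def truthSet (I : MForm) : Set (Σ M : Model, M.U) :=
  {p | Forces p.1 I p.2}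

theorem truthSet_impl_bot_bot : truthSet (.impl .bot .bot) = ⊤ :=
  Set.eq_univ_of_forall fun _ _ _ h => h

/-- The operation on truth sets induced by `→`. -/
def implSet (X Y : Set (Σ M : Model, M.U)) : Set (Σ M : Model, M.U) :=
  {p | ∀ b, p.1.rel p.2 b → ⟨p.1, b⟩ ∈ X → ⟨p.1, b⟩ ∈ Y}

/-- The operation on truth sets induced by `□`. -/
def boxSet (X : Set (Σ M : Model, M.U)) : Set (Σ M : Model, M.U) :=
  {p | ∀ b, p.1.relBox p.2 b → ⟨p.1, b⟩ ∈ X}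

/-- The operation on truth sets induced by `◇`. -/
def diamSet (X : Set (Σ M : Model, M.U)) : Set (Σ M : Model, M.U) :=
  {p | ∀ b, p.1.rel p.2 b → ∃ c, p.1.relDiam b c ∧ ⟨p.1, c⟩ ∈ X}

/-- The sets of pointed models definable by a formula of `Fragment Θ n`. -/
def definableSets (Θ : Set ℕ) (n : ℕ) : Set (Set (Σ M : Model, M.U)) :=
  truthSet '' {I | Fragment Θ n I}

/-- Lattice generators of `definableSets Θ n`: the truth sets of the formulas of depth at most `n`
that are neither conjunctions nor disjunctions. -/
def definableGenerators (Θ : Set ℕ) (n : ℕ) : Set (Set (Σ M : Model, M.U)) :=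
  {⊥, ⊤} ∪ (fun p => truthSet (.prop p)) '' Θ ∪
    ⋃ m < n, Set.image2 implSet (definableSets Θ m) (definableSets Θ m) ∪
      boxSet '' definableSets Θ m ∪ diamSet '' definableSets Θ m

section Finiteness

variable {Θ : Set ℕ} {n : ℕ}

theorem definableSets_subset_latticeClosure :
    definableSets Θ n ⊆ latticeClosure (definableGenerators Θ n) := by
  rintro _ ⟨I, hI, rfl⟩
  have generator_of_lt {m n : ℕ} (hm : m < n) {X : Set (Σ M : Model, M.U)}
      (hX : X ∈ Set.image2 implSet (definableSets Θ m) (definableSets Θ m) ∪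
        boxSet '' definableSets Θ m ∪ diamSet '' definableSets Θ m) :
      X ∈ latticeClosure (definableGenerators Θ n) :=
    subset_latticeClosure (.inr (Set.mem_biUnion (x := m) hm hX))
  induction hI with
  | bot => exact subset_latticeClosure (.inl (.inl (.inl rfl)))
  | top => exact subset_latticeClosure (.inl (.inl (.inr truthSet_impl_bot_bot)))
  | prop hp => exact subset_latticeClosure (.inl (.inr ⟨_, hp, rfl⟩))
  | conj _ _ hI hJ => exact isSublattice_latticeClosure.infClosed hI hJ
  | disj _ _ hI hJ => exact isSublattice_latticeClosure.supClosed hI hJ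
  | impl hm hI hJ =>
    exact generator_of_lt hm (.inl (.inl ⟨_, ⟨_, hI, rfl⟩, _, ⟨_, hJ, rfl⟩, rfl⟩))
  | box hm hI => exact generator_of_lt hm (.inl (.inr ⟨_, ⟨_, hI, rfl⟩, rfl⟩))
  | diam hm hI =>
    exact generator_of_lt (Nat.lt_of_succ_lt hm) (.inr ⟨_, ⟨_, hI, rfl⟩, rfl⟩)

theorem finite_definableSets (hΘ : Θ.Finite) : (definableSets Θ n).Finite := by
  induction n using Nat.strong_induction_on with
  | _ n ih =>
    refine Set.Finite.subset (Set.Finite.latticeClosure ?_) definableSets_subset_latticeClosure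
    refine ((Set.toFinite _).union (hΘ.image _)).union ((Set.finite_lt_nat n).biUnion ?_)
    intro m hm
    exact (((ih m hm).image2 _ (ih m hm)).union ((ih m hm).image _)).union ((ih m hm).image _)

theorem infClosed_definableSets : InfClosed (definableSets Θ n) := by
  rintro _ ⟨I, hI, rfl⟩ _ ⟨J, hJ, rfl⟩
  exact ⟨.conj I J, .conj hI hJ, rfl⟩

theorem supClosed_definableSets : SupClosed (definableSets Θ n) := by
  rintro _ ⟨I, hI, rfl⟩ _ ⟨J, hJ, rfl⟩
  exact ⟨.disj I J, .disj hI hJ, rfl⟩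

theorem exists_fragment_forces_iff_forall (hΘ : Θ.Finite) (n : ℕ) (p : MForm → Prop) :
    ∃ J, Fragment Θ n J ∧
      ∀ (M : Model) (a : M.U), Forces M J a ↔ ∀ I, Fragment Θ n I → p I → Forces M I a := by
  have hsub : truthSet '' {I | Fragment Θ n I ∧ p I} ⊆ definableSets Θ n :=
    Set.image_mono fun _ hI => hI.1
  obtain ⟨J, hJ, hJp⟩ := infClosed_definableSets.sInf_mem
    ((finite_definableSets hΘ).subset hsub) ⟨_, .top, truthSet_impl_bot_bot⟩ hsub
  refine ⟨J, hJ, fun M a => ?_⟩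
  simpa [truthSet] using Set.ext_iff.1 hJp ⟨M, a⟩

theorem exists_fragment_forces_iff_exists (hΘ : Θ.Finite) (n : ℕ) (p : MForm → Prop) :
    ∃ J, Fragment Θ n J ∧
      ∀ (M : Model) (a : M.U), Forces M J a ↔ ∃ I, Fragment Θ n I ∧ p I ∧ Forces M I a := by
  have hsub : truthSet '' {I | Fragment Θ n I ∧ p I} ⊆ definableSets Θ n :=
    Set.image_mono fun _ hI => hI.1
  obtain ⟨J, hJ, hJp⟩ := supClosed_definableSets.sSup_mem
    ((finite_definableSets hΘ).subset hsub) ⟨_, .bot, rfl⟩ hsub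
  refine ⟨J, hJ, fun M a => ?_⟩
  simpa [truthSet, and_assoc] using Set.ext_iff.1 hJp ⟨M, a⟩

end Finiteness

/-! ### Inclusion of theories of bounded depth -/

/-- Inclusion of the theory of `a` in that of `b`, for formulas of `Fragment Θ n`. -/
def TheoryLE (Θ : Set ℕ) (n : ℕ) {N P : Model} (a : N.U) (b : P.U) : Prop :=
  ∀ I, Fragment Θ n I → Forces N I a → Forces P I b

/-- Every formula of `Fragment Θ n` true at some `R_◇`-successor of `a` is true at some
`R_◇`-successor of `b`. This relates the intermediate points in the evaluation of a diamond, the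
ones handled by the second component of an asimulation. -/
def PossibilityLE (Θ : Set ℕ) (n : ℕ) {N P : Model} (a : N.U) (b : P.U) : Prop :=
  ∀ I, Fragment Θ n I → (∃ c, N.relDiam a c ∧ Forces N I c) → ∃ d, P.relDiam b d ∧ Forces P I d

section TheoryLE

variable {Θ : Set ℕ} {n : ℕ} {N P : Model} {a : N.U} {b d : P.U}

theorem TheoryLE.exists_rel (hΘ : Θ.Finite) (h : TheoryLE Θ (n + 1) a b) (hbd : P.rel b d) :
    ∃ c, N.rel a c ∧ TheoryLE Θ n c d ∧ TheoryLE Θ n d c := by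
  obtain ⟨T, hT, hT_iff⟩ := exists_fragment_forces_iff_forall hΘ n (Forces P · d)
  obtain ⟨F, hF, hF_iff⟩ := exists_fragment_forces_iff_exists hΘ n (¬ Forces P · d)
  have hb : ¬ Forces P (.impl T F) b := fun hTF =>
    have ⟨_, _, hId, hId'⟩ := (hF_iff P d).1 (hTF d hbd ((hT_iff P d).2 fun _ _ hI => hI))
    hId hId'
  have ha : ¬ Forces N (.impl T F) a := mt (h _ (.impl n.lt_succ_self hT hF)) hb
  simp only [Forces, not_forall] at ha
  obtain ⟨c, hac, hTc, hFc⟩ := ha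
  refine ⟨c, hac, fun I hI hIc => ?_, (hT_iff N c).1 hTc⟩
  by_contra hId
  exact hFc ((hF_iff N c).2 ⟨I, hI, hId, hIc⟩)

theorem TheoryLE.exists_relBox (hΘ : Θ.Finite) (h : TheoryLE Θ (n + 1) a b)
    (hbd : P.relBox b d) : ∃ c, N.relBox a c ∧ TheoryLE Θ n c d := by
  obtain ⟨F, hF, hF_iff⟩ := exists_fragment_forces_iff_exists hΘ n (¬ Forces P · d)
  have hb : ¬ Forces P (.box F) b := fun hbF =>
    have ⟨_, _, hId, hId'⟩ := (hF_iff P d).1 (hbF d hbd)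
    hId hId'
  have ha : ¬ Forces N (.box F) a := mt (h _ (.box n.lt_succ_self hF)) hb
  simp only [Forces, not_forall] at ha
  obtain ⟨c, hac, hFc⟩ := ha
  refine ⟨c, hac, fun I hI hIc => ?_⟩
  by_contra hId
  exact hFc ((hF_iff N c).2 ⟨I, hI, hId, hIc⟩)

theorem TheoryLE.exists_rel_possibilityLE (hΘ : Θ.Finite) (h : TheoryLE Θ (n + 2) a b)
    (hbd : P.rel b d) : ∃ c, N.rel a c ∧ PossibilityLE Θ n c d := by
  obtain ⟨F, hF, hF_iff⟩ := exists_fragment_forces_iff_exists hΘ n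
    fun I => ¬ ∃ f, P.relDiam d f ∧ Forces P I f
  have hb : ¬ Forces P (.diam F) b := fun hbF =>
    have ⟨f, hdf, hFf⟩ := hbF d hbd
    have ⟨_, _, hId, hIf⟩ := (hF_iff P f).1 hFf
    hId ⟨f, hdf, hIf⟩
  have ha : ¬ Forces N (.diam F) a := mt (h _ (.diam (n + 1).lt_succ_self hF)) hb
  simp only [Forces, not_forall] at ha
  obtain ⟨c, hac, hFc⟩ := ha
  refine ⟨c, hac, fun I hI ⟨e, hce, hIe⟩ => ?_⟩
  by_contra hId
  exact hFc ⟨e, hce, (hF_iff N e).2 ⟨I, hI, hId, hIe⟩⟩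

theorem PossibilityLE.exists_relDiam (hΘ : Θ.Finite) (h : PossibilityLE Θ n a b) {c : N.U}
    (hac : N.relDiam a c) : ∃ d, P.relDiam b d ∧ TheoryLE Θ n c d := by
  obtain ⟨T, hT, hT_iff⟩ := exists_fragment_forces_iff_forall hΘ n (Forces N · c)
  obtain ⟨d, hbd, hTd⟩ := h T hT ⟨c, hac, (hT_iff N c).2 fun _ _ hI => hI⟩
  exact ⟨d, hbd, (hT_iff P d).1 hTd⟩

end TheoryLE

/-! ### The canonical asimulation -/

/-- The relation between nonempty tuples of equal length that holds when `r m` relates their last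
entries, `m` being the number of entries before the last. -/
inductive LastRel {α β : Type*} (r : ℕ → α → β → Prop) : List α → List β → Prop
  | concat {as : List α} {bs : List β} {a : α} {b : β} :
      as.length = bs.length → r as.length a b → LastRel r (as ++ [a]) (bs ++ [b])

namespace LastRel

variable {α β : Type*} {r : ℕ → α → β → Prop} {as : List α} {bs : List β}

theorem concat_iff {a : α} {b : β} :
    LastRel r (as ++ [a]) (bs ++ [b]) ↔ as.length = bs.length ∧ r as.length a b := by
  refine ⟨fun h => ?_, fun h => .concat h.1 h.2⟩
  generalize hl : as ++ [a] = l, hl' : bs ++ [b] = l' at h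
  obtain ⟨hlen, hr⟩ := h
  simp_all

theorem concat_concat_iff {a c : α} {b d : β} :
    LastRel r (as ++ [a, c]) (bs ++ [b, d]) ↔
      as.length = bs.length ∧ r (as.length + 1) c d := by
  rw [List.append_cons as, List.append_cons bs, concat_iff]
  simp

theorem ne_nil_and_length_eq (h : LastRel r as bs) : as ≠ [] ∧ as.length = bs.length := by
  obtain ⟨hlen, -⟩ := h
  simp [hlen]

end LastRel

/-- First component of the canonical `k`-asimulation between two models. -/
def canonicalA (Θ : Set ℕ) (k : ℕ) (N P : Model) : List N.U → List P.U → Prop :=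
  LastRel fun m => TheoryLE Θ (k - m)

/-- Second component of the canonical `k`-asimulation between two models. One level is used up by
the `R_◇`-step that leads back to `canonicalA`. -/
def canonicalB (Θ : Set ℕ) (k : ℕ) (N P : Model) : List N.U → List P.U → Prop :=
  LastRel fun m => PossibilityLE Θ (k - (m + 1))

theorem isHalfAsim_canonical {Θ : Set ℕ} (hΘ : Θ.Finite) (N P : Model) (k : ℕ) :
    IsHalfAsim Θ N P k (canonicalA Θ k N P) (canonicalA Θ k P N) (canonicalB Θ k N P) where
  type_fst _ _ h := h.ne_nil_and_length_eq
  type_snd _ _ h := h.ne_nil_and_length_eq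
  base as bs a b hab p hp := (LastRel.concat_iff.1 hab).2 _ (.prop hp)
  step as bs a b d hab hbd hk := by
    obtain ⟨hlen, h⟩ := LastRel.concat_iff.1 hab
    rw [show k - as.length = k - (as.length + 1) + 1 by lia] at h
    obtain ⟨c, hac, hcd, hdc⟩ := h.exists_rel hΘ hbd
    exact ⟨c, hac, LastRel.concat_concat_iff.2 ⟨hlen, hcd⟩,
      LastRel.concat_concat_iff.2 ⟨hlen.symm, hlen ▸ hdc⟩⟩
  box as bs a b d hab hbd hk := by
    obtain ⟨hlen, h⟩ := LastRel.concat_iff.1 hab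
    rw [show k - as.length = k - (as.length + 1) + 1 by lia] at h
    obtain ⟨c, hac, hcd⟩ := h.exists_relBox hΘ hbd
    exact ⟨c, hac, LastRel.concat_concat_iff.2 ⟨hlen, hcd⟩⟩
  diam_fst as bs a b d hab hbd hk := by
    obtain ⟨hlen, h⟩ := LastRel.concat_iff.1 hab
    rw [show k - as.length = k - (as.length + 1 + 1) + 2 by lia] at h
    obtain ⟨c, hac, hcd⟩ := h.exists_rel_possibilityLE hΘ hbd
    exact ⟨c, hac, LastRel.concat_concat_iff.2 ⟨hlen, hcd⟩⟩
  diam_snd as bs a c b hab hac _ := by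
    obtain ⟨hlen, h⟩ := LastRel.concat_iff.1 hab
    obtain ⟨d, hbd, hcd⟩ := h.exists_relDiam hΘ hac
    exact ⟨d, hbd, LastRel.concat_concat_iff.2 ⟨hlen, hcd⟩⟩

theorem KInvariantD2.satAt_of_theoryLE {x k : ℕ} {φ : FOForm} (hφ : KInvariantD2 true x φ k)
    {M N : Model} {a : M.U} {b : N.U} (ha : SatAt M a x φ)
    (hab : TheoryLE φ.predLetters k a b) : SatAt N b x φ := by
  have hΘ := φ.predLetters.finite_toSet
  have root : canonicalA φ.predLetters k M N [a] [b] := LastRel.concat (as := []) (bs := []) rfl hab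
  exact hφ _ subset_rfl M N a b _ _ _ _ (isKAsimD2_true_iff.2
    ⟨root, isHalfAsim_canonical hΘ M N k, isHalfAsim_canonical hΘ N M k⟩) a b root ha

theorem exists_equiv_ST_of_theoryLE_preserves {Θ : Set ℕ} (hΘ : Θ.Finite) {x k : ℕ} {φ : FOForm}
    (hφ : ∀ {M N : Model} {α : ℕ → M.U} {β : ℕ → N.U},
      Sat M φ α → TheoryLE Θ k (α x) (β x) → Sat N φ β) :
    ∃ I, Equiv φ (ST true false I x) := by
  obtain ⟨J, -, hJ⟩ := exists_fragment_forces_iff_exists hΘ k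
    fun I => Entails (ST true false I x) φ
  refine ⟨J, fun M α => ?_⟩
  rw [sat_ST_iff_forces, hJ]
  constructor
  · intro hα
    obtain ⟨T, hT, hT_iff⟩ := exists_fragment_forces_iff_forall hΘ k (Forces M · (α x))
    refine ⟨T, hT, fun N β hβ => hφ hα ?_, (hT_iff M (α x)).2 fun _ _ hI => hI⟩
    exact (hT_iff N (β x)).1 ((sat_ST_iff_forces N T x β).1 hβ)
  · rintro ⟨I, -, hIφ, hIα⟩
    exact hIφ M α ((sat_ST_iff_forces M I x α).2 hIα)

/-- **Theorem 1, case (i,j) = (1,2).**  φ(x) is logically equivalent to the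
(1,2)-standard x-translation of a modal intuitionistic formula iff there is a
k ∈ ℕ such that φ(x) is invariant with respect to (1,2)-modal k-asimulations. -/
theorem statement_3 (x : ℕ) (φ : FOForm) (hfv : φ.freeVars ⊆ {x}) :
    (∃ I : MForm, Equiv φ (ST true false I x)) ↔
    (∃ k : ℕ, KInvariantD2 true x φ k) := by
  constructor
  · rintro ⟨I, hI⟩
    obtain ⟨k, hk⟩ := exists_fragment_univ I
    exact ⟨k, hk.kInvariantD2_of_equiv hI⟩
  · rintro ⟨k, hk⟩
    refine exists_equiv_ST_of_theoryLE_preserves (k := k) φ.predLetters.finite_toSet ?_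
    intro M N α β hα hαβ
    exact (satAt_iff_sat hfv β).1 (hk.satAt_of_theoryLE ((satAt_iff_sat hfv α).2 hα) hαβ)

end ModalIntAsim
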